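/- For every integer n ≥ 40, |Ẽ(n+1) + Ẽ(n-1) - 2·Ẽ(n)| < (5/(n-1)) · e^{-π·√(24n-25)/18}, where Ẽ(m) = (1/m)·log(p(m)/T̃(m)). -/

import Mathlib

open Real

/-- The partition function, as a real number. -/
noncomputable def p (n : ℕ) : ℝ := (Fintype.card (Nat.Partition n) : ℝ)

/-- `μ(x) = (π/6)·√(24x - 1)`. -/
noncomputable def mu (x : ℝ) : ℝ := π / 6 * Real.sqrt (24 * x - 1)

/-- `d = π²/(6√3)`. -/
noncomputable def d : ℝ := π ^ 2 / (6 * Real.sqrt 3)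

/-- The main term `T̃(x) = (d/μ(x)²)·(1 - 1/μ(x))·e^{μ(x)}`. -/
noncomputable def T (x : ℝ) : ℝ := d / mu x ^ 2 * (1 - 1 / mu x) * Real.exp (mu x)

/-- The error term `Ẽ(n) = (1/n)·log(p(n)/T̃(n))`. -/
noncomputable def E (n : ℕ) : ℝ := 1 / (n : ℝ) * Real.log (p n / T (n : ℝ))

/-!
By the triangle inequality it is enough that `|p n - T n| ≤ T n * exp (-mu n / 3)` for `n ≥ 39`,
since then `log (p n / T n)` is at most `1.2 * exp (-mu n / 3)` in absolute value.

For `n ≥ 400` the circle method needs a single arc. Cauchy's formula writes `p n` as the integral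
of `e ^ (2 * π * (n - 1 / 24) * w) / η(i * w)` over the segment `w = y + i * x`, `|x| ≤ 1 / 2`,
with `y = 1 / (2 * √(24 * n - 1))`. For `|x| ≤ √3 * y` the inversion `η(i / w) = √w * η(i * w)`
replaces `1 / η(i * w)` by `√w * e ^ (π / (12 * w))` up to a small error; for other `x`, moving
`i * w` to the fundamental domain shows that `1 / η(i * w)` is `O(e ^ (π / (48 * y)))`. The chord
`|x| ≤ √3 * y` is then deformed to an arc of the circle `|w| = 2 * y`, on which, up to a constant
factor, the real part of the integrand is `cos (3 * φ / 2) * e ^ (mu n * cos φ)`. The substitution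
`t = √(2 * mu n) * sin (φ / 2)` turns the integral over the arc into a truncated Gaussian moment
whose completion is exactly `T n`, and the total error is `O(e ^ (mu n / 2))`.

For `39 ≤ n < 400` the exact values of `p n` are compared with rational bounds for
`T n * (1 ± exp (-mu n / 3))`.
-/

section PartitionGeneratingFunction

open Finset

/-- The number of partitions of `n` all of whose parts are at most `N`; its generating function is
the `N`-th partial Euler product. -/
def partsLE (N n : ℕ) : ℕ := #(Nat.Partition.restricted n (· ≤ N))

lemma partsLE_le (N n : ℕ) : partsLE N n ≤ Fintype.card n.Partition :=
  card_le_univ _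

lemma partsLE_of_le {N n : ℕ} (h : n ≤ N) : partsLE N n = Fintype.card n.Partition := by
  rw [partsLE, Nat.Partition.restricted, filter_true_of_mem, card_univ]
  exact fun _ _ _ hi ↦ (Nat.Partition.le_of_mem_parts hi).trans h

open PowerSeries PowerSeries.WithPiTopology in
lemma mk_partsLE_eq_prod_tsum (N : ℕ) :
    letI : TopologicalSpace ℤ := ⊥
    PowerSeries.mk (fun n ↦ (partsLE N n : ℤ)) =
      ∏ k ∈ range N, ∑' j : ℕ, (X : ℤ⟦X⟧) ^ ((k + 1) * j) := by
  let : TopologicalSpace ℤ := ⊥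
  have : DiscreteTopology ℤ := ⟨rfl⟩
  simp only [partsLE]
  rw [Nat.Partition.powerSeriesMk_card_restricted_eq_tprod,
    tprod_eq_prod (s := range N) fun k hk ↦ if_neg (by simpa using hk)]
  exact prod_congr rfl fun k hk ↦ if_pos (mem_range.1 hk)

open PowerSeries PowerSeries.WithPiTopology in
lemma mk_partsLE_succ_mul (N : ℕ) :
    PowerSeries.mk (fun n ↦ (partsLE (N + 1) n : ℤ)) * (1 - X ^ (N + 1)) =
      PowerSeries.mk fun n ↦ (partsLE N n : ℤ) := by
  let : TopologicalSpace ℤ := ⊥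
  have : DiscreteTopology ℤ := ⟨rfl⟩
  simp only [mk_partsLE_eq_prod_tsum, prod_range_succ, mul_assoc, pow_mul]
  rw [tsum_pow_mul_one_sub_of_constantCoeff_eq_zero (by simp), mul_one]

lemma partsLE_zero (n : ℕ) : partsLE 0 n = if n = 0 then 1 else 0 := by
  have h := congrArg (PowerSeries.coeff n) (mk_partsLE_eq_prod_tsum 0)
  rw [range_zero, prod_empty, PowerSeries.coeff_mk, PowerSeries.coeff_one] at h
  exact_mod_cast h

lemma partsLE_succ (N n : ℕ) :
    partsLE (N + 1) n = partsLE N n + if N + 1 ≤ n then partsLE (N + 1) (n - (N + 1)) else 0 := by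
  have h := congrArg (PowerSeries.coeff n) (mk_partsLE_succ_mul N)
  simp only [mul_sub, mul_one, map_sub, PowerSeries.coeff_mul_X_pow', PowerSeries.coeff_mk] at h
  exact_mod_cast sub_eq_iff_eq_add.1 h

lemma sum_range_partsLE_succ {R : Type*} [CommSemiring R] (q : R) (N M : ℕ) :
    ∑ n ∈ range M, (partsLE (N + 1) n : R) * q ^ n =
      ∑ n ∈ range M, (partsLE N n : R) * q ^ n +
        q ^ (N + 1) * ∑ n ∈ range (M - (N + 1)), (partsLE (N + 1) n : R) * q ^ n := by
  induction M with
  | zero => simp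
  | succ M ih =>
    rw [sum_range_succ, sum_range_succ, ih, partsLE_succ]
    rcases Nat.lt_or_ge M (N + 1) with h | h
    · simp [Nat.sub_eq_zero_of_le h, Nat.sub_eq_zero_of_le h.le, h.not_ge]
    · rw [if_pos h, Nat.sub_add_comm h, sum_range_succ, ← Nat.add_sub_cancel' h]
      simp only [Nat.add_sub_cancel_left, pow_add _ (N + 1)]
      push_cast
      ring

lemma p_nonneg (n : ℕ) : 0 ≤ p n := Nat.cast_nonneg _

lemma p_zero : p 0 = 1 := by simp [p]

section Real

variable {r : ℝ}

lemma sum_range_partsLE_le (h0 : 0 ≤ r) (h1 : r < 1) (N M : ℕ) :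
    ∑ n ∈ range M, (partsLE N n : ℝ) * r ^ n ≤ (∏ k ∈ range N, (1 - r ^ (k + 1)))⁻¹ := by
  induction N with
  | zero => rcases M with _ | M <;> simp [partsLE_zero]
  | succ N ih =>
    have hpos : 0 < 1 - r ^ (N + 1) := sub_pos.2 (pow_lt_one₀ h0 h1 N.succ_ne_zero)
    have hle : ∑ n ∈ range (M - (N + 1)), (partsLE (N + 1) n : ℝ) * r ^ n ≤
        ∑ n ∈ range M, (partsLE (N + 1) n : ℝ) * r ^ n :=
      sum_le_sum_of_subset_of_nonneg (range_mono (Nat.sub_le _ _)) fun _ _ _ ↦ by positivity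
    rw [prod_range_succ, mul_inv, ← div_eq_mul_inv, le_div_iff₀ hpos]
    linarith [sum_range_partsLE_succ r N M, mul_le_mul_of_nonneg_left hle (pow_nonneg h0 (N + 1))]

lemma sum_range_p_mul_pow_le (h0 : 0 ≤ r) (h1 : r < 1) (M : ℕ) :
    ∑ n ∈ range M, p n * r ^ n ≤ (∏ k ∈ range M, (1 - r ^ (k + 1)))⁻¹ := by
  refine (sum_congr rfl fun n hn ↦ ?_).trans_le (sum_range_partsLE_le h0 h1 M M)
  rw [partsLE_of_le (mem_range.1 hn).le, p]

lemma one_sub_sum_le_prod_one_sub {ι : Type*} (s : Finset ι) {f : ι → ℝ} (h0 : ∀ i ∈ s, 0 ≤ f i)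
    (h1 : ∀ i ∈ s, f i ≤ 1) : 1 - ∑ i ∈ s, f i ≤ ∏ i ∈ s, (1 - f i) := by
  classical
  induction s using Finset.induction with
  | empty => simp
  | insert a s ha ih =>
    rw [sum_insert ha, prod_insert ha]
    simp only [forall_mem_insert] at h0 h1
    have hs := mul_le_mul_of_nonneg_left (ih h0.2 h1.2) (sub_nonneg.2 h1.1)
    linarith [mul_nonneg h0.1 (sum_nonneg h0.2)]

lemma one_sub_div_one_sub_le_prod (h0 : 0 ≤ r) (h1 : r < 1) (M : ℕ) :
    1 - r / (1 - r) ≤ ∏ k ∈ range M, (1 - r ^ (k + 1)) := by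
  have hgeom := (summable_geometric_of_lt_one h0 h1).sum_le_tsum (range M)
    fun i _ ↦ pow_nonneg h0 i
  rw [tsum_geometric_of_lt_one h0 h1] at hgeom
  calc 1 - r / (1 - r) ≤ 1 - ∑ k ∈ range M, r ^ (k + 1) := by
        simp only [pow_succ', ← mul_sum, div_eq_mul_inv]
        gcongr
    _ ≤ _ := one_sub_sum_le_prod_one_sub _ (fun k _ ↦ by positivity) fun k _ ↦ pow_le_one₀ h0 h1.le

end Real

section Complex

variable {q : ℂ}

lemma one_sub_pow_succ_ne_zero (hq : ‖q‖ < 1) (n : ℕ) : 1 - q ^ (n + 1) ≠ 0 := by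
  refine sub_ne_zero.2 fun h ↦ (pow_lt_one₀ (norm_nonneg q) hq n.succ_ne_zero).ne ?_
  rw [← norm_pow, ← h, norm_one]

lemma tprod_one_sub_pow_ne_zero (hq : ‖q‖ < 1) : ∏' k : ℕ, (1 - q ^ (k + 1)) ≠ 0 := by
  simp only [sub_eq_add_neg]
  refine tprod_one_add_ne_zero_of_summable
    (fun n ↦ by simpa [sub_eq_add_neg] using one_sub_pow_succ_ne_zero hq n) ?_
  simpa using (summable_nat_add_iff 1).2 (summable_geometric_of_lt_one (norm_nonneg q) hq)

lemma tendsto_inv_prod_one_sub_pow (hq : ‖q‖ < 1) :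
    Filter.Tendsto (fun N ↦ (∏ k ∈ range N, (1 - q ^ (k + 1)))⁻¹) Filter.atTop
      (nhds (∏' k : ℕ, (1 - q ^ (k + 1)))⁻¹) :=
  (ModularForm.multipliable_one_sub_pow hq).hasProd.tendsto_prod_nat.inv₀
    (tprod_one_sub_pow_ne_zero hq)

lemma summable_p_mul_pow {r : ℝ} (h0 : 0 ≤ r) (h1 : r < 1) : Summable fun n ↦ p n * r ^ n := by
  have hr : ‖(r : ℂ)‖ < 1 := by rwa [Complex.norm_real, norm_of_nonneg h0]
  obtain ⟨c, hc⟩ := (tendsto_inv_prod_one_sub_pow hr).norm.bddAbove_range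
  refine summable_of_sum_range_le (c := c) (fun n ↦ mul_nonneg (p_nonneg n) (pow_nonneg h0 n))
    fun M ↦ (sum_range_p_mul_pow_le h0 h1 M).trans ?_
  refine (le_abs_self _).trans (le_of_eq_of_le ?_ (hc (Set.mem_range_self M)))
  rw [← norm_eq_abs, ← Complex.norm_real]
  push_cast
  rfl

lemma norm_partsLE_mul_pow_le (q : ℂ) (N n : ℕ) : ‖(partsLE N n : ℂ) * q ^ n‖ ≤ p n * ‖q‖ ^ n := by
  rw [norm_mul, norm_pow, Complex.norm_natCast, p]
  gcongr
  exact partsLE_le N n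

lemma summable_partsLE_mul_pow (hq : ‖q‖ < 1) (N : ℕ) :
    Summable fun n ↦ (partsLE N n : ℂ) * q ^ n :=
  (summable_p_mul_pow (norm_nonneg q) hq).of_norm_bounded (norm_partsLE_mul_pow_le q N)

lemma tsum_partsLE_mul_pow (hq : ‖q‖ < 1) (N : ℕ) :
    ∑' n, (partsLE N n : ℂ) * q ^ n = (∏ k ∈ range N, (1 - q ^ (k + 1)))⁻¹ := by
  induction N with
  | zero => simp [partsLE_zero]
  | succ N ih =>
    have hsum (N : ℕ) := (summable_partsLE_mul_pow hq N).hasSum.tendsto_sum_nat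
    have hrec := tendsto_nhds_unique (hsum (N + 1)) <|
      ((hsum N).add (((hsum (N + 1)).comp (Filter.tendsto_sub_atTop_nat (N + 1))).const_mul
        (q ^ (N + 1)))).congr fun M ↦ (sum_range_partsLE_succ q N M).symm
    rw [prod_range_succ, mul_inv, ← div_eq_mul_inv, eq_div_iff (one_sub_pow_succ_ne_zero hq N)]
    linear_combination hrec + ih

theorem hasSum_p_mul_pow (hq : ‖q‖ < 1) :
    HasSum (fun n ↦ (p n : ℂ) * q ^ n) (∏' k : ℕ, (1 - q ^ (k + 1)))⁻¹ := by
  have hbound := summable_p_mul_pow (norm_nonneg q) hq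
  have hsum : Summable fun n ↦ (p n : ℂ) * q ^ n := hbound.of_norm_bounded fun n ↦ by
    rw [norm_mul, norm_pow, Complex.norm_real, norm_of_nonneg (p_nonneg n)]
  have hlim : Filter.Tendsto (fun N ↦ ∑' n, (partsLE N n : ℂ) * q ^ n) Filter.atTop
      (nhds (∑' n, (p n : ℂ) * q ^ n)) := by
    refine tendsto_tsum_of_dominated_convergence hbound (fun n ↦ ?_)
      (.of_forall fun N n ↦ norm_partsLE_mul_pow_le q N n)
    refine tendsto_nhds_of_eventually_eq ((Filter.eventually_ge_atTop n).mono fun N hN ↦ ?_)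
    rw [partsLE_of_le hN, p, Complex.ofReal_natCast]
  have heq := tendsto_nhds_unique hlim <|
    (tendsto_inv_prod_one_sub_pow hq).congr fun N ↦ (tsum_partsLE_mul_pow hq N).symm
  exact heq ▸ hsum.hasSum

lemma tsum_p_mul_pow_le {r : ℝ} (h0 : 0 ≤ r) (h1 : r < 1 / 2) :
    ∑' n, p n * r ^ n ≤ 1 + r / (1 - 2 * r) := by
  have hr : r < 1 := by linarith
  have hpos : 0 < 1 - r / (1 - r) := by
    rw [sub_pos, div_lt_one (by linarith)]
    linarith
  refine (summable_p_mul_pow h0 hr).tsum_le_of_sum_range_le fun M ↦ ?_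
  calc ∑ n ∈ range M, p n * r ^ n ≤ (∏ k ∈ range M, (1 - r ^ (k + 1)))⁻¹ :=
        sum_range_p_mul_pow_le h0 hr M
    _ ≤ (1 - r / (1 - r))⁻¹ := inv_anti₀ hpos (one_sub_div_one_sub_le_prod h0 hr M)
    _ = 1 + r / (1 - 2 * r) := by
        have h1r : 1 - r ≠ 0 := by linarith
        have h2r : 1 - 2 * r ≠ 0 := by linarith
        rw [one_sub_div h1r, inv_div, one_add_div h2r]
        congr 1 <;> ring

lemma norm_inv_tprod_sub_one_le (hq : ‖q‖ < 1 / 2) :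
    ‖(∏' k : ℕ, (1 - q ^ (k + 1)))⁻¹ - 1‖ ≤ ‖q‖ / (1 - 2 * ‖q‖) := by
  have hq1 : ‖q‖ < 1 := by linarith
  have htail := (hasSum_nat_add_iff' 1).2 (hasSum_p_mul_pow hq1)
  have hbound := summable_p_mul_pow (norm_nonneg q) hq1
  have hle := tsum_p_mul_pow_le (norm_nonneg q) hq
  rw [hbound.tsum_eq_zero_add, p_zero] at hle
  simp only [range_one, sum_singleton, pow_zero, mul_one, p_zero, Complex.ofReal_one] at htail
  rw [← htail.tsum_eq]
  refine (tsum_of_norm_bounded ((summable_nat_add_iff 1).2 hbound).hasSum fun n ↦ ?_).trans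
    (by linarith)
  rw [norm_mul, norm_pow, Complex.norm_real, norm_of_nonneg (p_nonneg _)]

end Complex

end PartitionGeneratingFunction

section DedekindEta

open ModularForm
open Complex hiding eta
open UpperHalfPlane hiding I

lemma inv_eta_eq (z : ℂ) : (eta z)⁻¹ =
    cexp (-(π * I * z / 12)) * (∏' k : ℕ, (1 - cexp (2 * π * I * z) ^ (k + 1)))⁻¹ := by
  simp only [eta, eta_q_eq_pow, Function.Periodic.qParam]
  rw [mul_inv, ← Complex.exp_neg]
  congr 3
  push_cast
  ring

lemma exp_neg_two_pi_mul_lt {t : ℝ} (ht : 1 / 2 ≤ t) : rexp (-(2 * π * t)) < 1 / 22 := by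
  have h22 : (22 : ℝ) < rexp 3.14 := by
    refine lt_of_lt_of_le ?_ (Real.sum_le_exp_of_nonneg (by norm_num) 9)
    norm_num [Finset.sum_range_succ, Nat.factorial]
  rw [Real.exp_neg, ← one_div]
  refine one_div_lt_one_div_of_lt (by norm_num) (h22.trans_le (Real.exp_le_exp.2 ?_))
  nlinarith [Real.pi_gt_d2]

lemma norm_exp_two_pi_I_mul (z : ℂ) : ‖cexp (2 * π * I * z)‖ = rexp (-(2 * π * z.im)) := by
  simp [Complex.norm_exp]

lemma norm_inv_tprod_exp_sub_one_le {z : ℂ} (hz : 1 / 2 ≤ z.im) :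
    ‖(∏' k : ℕ, (1 - cexp (2 * π * I * z) ^ (k + 1)))⁻¹ - 1‖ ≤
      11 / 10 * rexp (-(2 * π * z.im)) := by
  have hlt := exp_neg_two_pi_mul_lt hz
  rw [← norm_exp_two_pi_I_mul] at hlt ⊢
  refine (norm_inv_tprod_sub_one_le (by linarith)).trans ?_
  rw [div_le_iff₀ (by linarith)]
  nlinarith [norm_nonneg (cexp (2 * π * I * z))]

lemma norm_inv_eta_le {z : ℂ} (hz : 1 / 2 ≤ z.im) :
    ‖(eta z)⁻¹‖ ≤ 1.05 * rexp (π * z.im / 12) := by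
  have hexp : ‖cexp (-(π * I * z / 12))‖ = rexp (π * z.im / 12) := by
    rw [Complex.norm_exp]
    simp [mul_div_assoc]
  have hprod := norm_le_norm_add_norm_sub' (∏' k : ℕ, (1 - cexp (2 * π * I * z) ^ (k + 1)))⁻¹ 1
  rw [inv_eta_eq, norm_mul, hexp, mul_comm]
  gcongr
  rw [norm_one] at hprod
  linarith [norm_inv_tprod_exp_sub_one_le hz, exp_neg_two_pi_mul_lt hz]

lemma norm_discriminant_smul (g : Matrix.SpecialLinearGroup (Fin 2) ℤ) (z : ℍ) :
    ‖discriminant (g • z)‖ = ‖denom g z‖ ^ 12 * ‖discriminant z‖ := by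
  have h := congrFun (SlashInvariantForm.slash_action_generators_SL2Z
    discriminant_S_invariant discriminant_T_invariant g) z
  rw [SL_slash_apply] at h
  have hd : ‖denom g z‖ ^ 12 ≠ 0 := pow_ne_zero _ (norm_ne_zero_iff.2 (denom_ne_zero _ z))
  rw [← h, norm_mul, norm_zpow, mul_comm, mul_assoc, show (-12 : ℤ) = -((12 : ℕ) : ℤ) from rfl,
    zpow_neg, zpow_natCast, inv_mul_cancel₀ hd, mul_one]

lemma norm_eta_smul_sq (g : Matrix.SpecialLinearGroup (Fin 2) ℤ) (z : ℍ) :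
    ‖eta (g • z : ℍ)‖ ^ 2 = ‖denom g z‖ * ‖eta z‖ ^ 2 := by
  have h := norm_discriminant_smul g z
  simp only [discriminant, norm_pow] at h
  refine (pow_left_inj₀ (by positivity) (by positivity) (show 12 ≠ 0 by decide)).1 ?_
  rw [mul_pow, ← pow_mul, ← pow_mul, h]

lemma norm_inv_eta_le_norm_inv_eta_smul {g : Matrix.SpecialLinearGroup (Fin 2) ℤ} {z : ℍ}
    (h : ‖denom g z‖ ≤ 1) : ‖(eta z)⁻¹‖ ≤ ‖(eta (g • z : ℍ))⁻¹‖ := by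
  rw [norm_inv, norm_inv]
  refine inv_anti₀ (norm_pos_iff.2 (eta_ne_zero (g • z).im_pos)) ?_
  refine le_of_sq_le_sq ?_ (norm_nonneg _)
  rw [norm_eta_smul_sq]
  exact mul_le_of_le_one_left (sq_nonneg _) h

lemma normSq_denom (g : Matrix.SpecialLinearGroup (Fin 2) ℤ) (z : ℍ) :
    normSq (denom g z) = (g 1 0 * z.re + g 1 1) ^ 2 + (g 1 0 * z.im) ^ 2 := by
  rw [ModularGroup.denom_apply, normSq_apply]
  simp
  ring

lemma min_le_sq_add_sq {x y : ℝ} (hx : |x| ≤ 1 / 2) {c : ℤ} (hc : c ≠ 0) (e : ℤ) :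
    min (x ^ 2 + y ^ 2) (4 * y ^ 2) ≤ (c * x + e) ^ 2 + (c * y) ^ 2 := by
  rcases (Int.one_le_abs hc).eq_or_lt with h1 | h2
  · have hc1 : |(c : ℝ)| = 1 := by exact_mod_cast h1.symm
    have habs : |x| ≤ |c * x + e| := by
      have hcx : |c * x| = |x| := by rw [abs_mul, hc1, one_mul]
      rcases eq_or_ne e 0 with rfl | he
      · simp [hcx]
      · have he1 : (1 : ℝ) ≤ |(e : ℝ)| := by exact_mod_cast Int.one_le_abs he
        have := abs_sub_abs_le_abs_sub (e : ℝ) (-(c * x))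
        rw [abs_neg, hcx, sub_neg_eq_add, add_comm] at this
        linarith
    refine (min_le_left _ _).trans ?_
    rw [mul_pow, ← sq_abs (c : ℝ), hc1, one_pow, one_mul]
    gcongr ?_ + _
    exact sq_le_sq.2 habs
  · refine (min_le_right _ _).trans (le_add_of_nonneg_of_le (sq_nonneg _) ?_)
    have hc2 : (2 : ℝ) ≤ |(c : ℝ)| := by exact_mod_cast h2
    rw [mul_pow, ← sq_abs (c : ℝ)]
    gcongr
    nlinarith

lemma im_smul_le {g : Matrix.SpecialLinearGroup (Fin 2) ℤ} {z : ℍ} (hc : g 1 0 ≠ 0)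
    (hre : |z.re| ≤ 1 / 2) (hfar : 4 * z.im ^ 2 ≤ z.re ^ 2 + z.im ^ 2) :
    (g • z).im ≤ 1 / (4 * z.im) := by
  have : 0 < z.im := z.im_pos
  have hmin := min_le_sq_add_sq (y := z.im) hre hc (g 1 1)
  rw [min_eq_right hfar, ← normSq_denom] at hmin
  rw [ModularGroup.im_smul_eq_div_normSq,
    div_le_div_iff₀ (normSq_denom_pos _ z.im_ne_zero) (by positivity)]
  linarith

lemma norm_inv_eta_le_of_far {z : ℍ} (hre : |z.re| ≤ 1 / 2) (him : z.im < 1 / 2)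
    (hfar : 4 * z.im ^ 2 ≤ z.re ^ 2 + z.im ^ 2) :
    ‖(eta z)⁻¹‖ ≤ 1.05 * rexp (π / (48 * z.im)) := by
  obtain ⟨g, hg, hdenom⟩ := ModularGroup.exists_one_half_le_im_smul_and_norm_denom_le z
  have hc : g 1 0 ≠ 0 := fun h ↦ by
    obtain ⟨k, hk⟩ := ModularGroup.exists_eq_T_zpow_of_c_eq_zero h
    rw [hk, ModularGroup.im_T_zpow_smul] at hg
    linarith
  calc ‖(eta z)⁻¹‖ ≤ ‖(eta (g • z : ℍ))⁻¹‖ := norm_inv_eta_le_norm_inv_eta_smul hdenom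
    _ ≤ 1.05 * rexp (π * (g • z).im / 12) := norm_inv_eta_le hg
    _ ≤ 1.05 * rexp (π * (1 / (4 * z.im)) / 12) := by
        gcongr
        exact im_smul_le hc hre hfar
    _ = 1.05 * rexp (π / (48 * z.im)) := by
        congr 2
        field_simp
        norm_num

lemma norm_inv_eta_I_mul_le_of_far {w : ℂ} (hre : 0 < w.re) (hre2 : w.re < 1 / 2)
    (him : |w.im| ≤ 1 / 2) (hfar : 4 * w.re ^ 2 ≤ normSq w) :
    ‖(eta (I * w))⁻¹‖ ≤ 1.05 * rexp (π / (48 * w.re)) := by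
  have hre' : (I * w).re = -w.im := by simp
  have him' : (I * w).im = w.re := by simp
  simpa [UpperHalfPlane.im, him'] using norm_inv_eta_le_of_far (z := ⟨I * w, him' ▸ hre⟩)
    (by simpa [UpperHalfPlane.re, hre'] using him) (by simpa [UpperHalfPlane.im, him'] using hre2)
    (by rw [normSq_apply] at hfar
        simp only [UpperHalfPlane.re, UpperHalfPlane.im, hre', him']
        linarith)

lemma csqrt_sq (w : ℂ) : Complex.sqrt w ^ 2 = w := by
  exact_mod_cast cpow_nat_inv_pow w two_ne_zero

lemma csqrt_ne_zero {w : ℂ} (hw : w ≠ 0) : Complex.sqrt w ≠ 0 :=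
  fun h ↦ hw (by rw [← csqrt_sq w, h, zero_pow two_ne_zero])

lemma csqrt_I_mul {w : ℂ} (hw : 0 < w.re) :
    Complex.sqrt (I * w) = Complex.sqrt I * Complex.sqrt w := by
  have hw0 : w ≠ 0 := ne_zero_of_re_pos hw
  obtain ⟨h1, h2⟩ := abs_lt.1 (abs_arg_lt_pi_div_two_iff.2 (.inl hw))
  have hlog : Complex.log (I * w) = Complex.log I + Complex.log w :=
    Complex.log_mul I_ne_zero hw0 (by rw [arg_I]; constructor <;> linarith)
  rw [sqrt_eq_exp (mul_ne_zero I_ne_zero hw0), sqrt_eq_exp I_ne_zero, sqrt_eq_exp hw0,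
    ← Complex.exp_add, hlog, add_div]

lemma inv_eta_I_mul {w : ℂ} (hw : 0 < w.re) :
    (eta (I * w))⁻¹ = Complex.sqrt w * (eta (I / w))⁻¹ := by
  have hw0 : w ≠ 0 := ne_zero_of_re_pos hw
  have h := eta_comp_eq_csqrt_I_inv (x := I * w) (show 0 < (I * w).im by simpa using hw)
  simp only [Function.comp_apply, Pi.smul_apply, Pi.mul_apply, smul_eq_mul] at h
  have hinv : -1 / (I * w) = I / w := by
    field_simp
    simp
  rw [hinv, csqrt_I_mul hw, mul_assoc, inv_mul_cancel_left₀ (csqrt_ne_zero I_ne_zero)] at h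
  rw [h, mul_inv, mul_inv_cancel_left₀ (csqrt_ne_zero hw0)]

lemma norm_inv_eta_sub_exp_le {z : ℂ} (hz : 1 / 2 ≤ z.im) :
    ‖(eta z)⁻¹ - cexp (-(π * I * z / 12))‖ ≤ 1 := by
  have hexp : ‖cexp (-(π * I * z / 12))‖ = rexp (π * z.im / 12) := by
    rw [Complex.norm_exp]
    simp [mul_div_assoc]
  rw [inv_eta_eq, ← mul_sub_one, norm_mul, hexp]
  calc rexp (π * z.im / 12) * _
      ≤ rexp (π * z.im / 12) * (11 / 10 * rexp (-(2 * π * z.im))) :=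
        mul_le_mul_of_nonneg_left (norm_inv_tprod_exp_sub_one_le hz) (Real.exp_nonneg _)
    _ = 11 / 10 * rexp (-(23 / 12 * (π * z.im))) := by
        rw [mul_left_comm, ← Real.exp_add]
        congr 2
        ring
    _ ≤ 11 / 10 * rexp (-1) := by
        gcongr
        nlinarith [Real.pi_gt_three]
    _ ≤ 1 := by linarith [Real.exp_neg_one_lt_half]

lemma norm_inv_eta_I_mul_sub_le_of_near {w : ℂ} (hre : 0 < w.re) (hre2 : w.re ≤ 1 / 2)
    (hnear : normSq w ≤ 4 * w.re ^ 2) :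
    ‖(eta (I * w))⁻¹ - Complex.sqrt w * cexp (π / (12 * w))‖ ≤ 1 := by
  have hw0 : w ≠ 0 := ne_zero_of_re_pos hre
  have him : 1 / 2 ≤ (I / w).im := by
    rw [div_im, Complex.I_re, Complex.I_im, one_mul, zero_mul, zero_div, sub_zero,
      div_le_div_iff₀ two_pos (normSq_pos.2 hw0)]
    nlinarith
  have hsqrt : ‖Complex.sqrt w‖ ≤ 1 := by
    rw [← sq_le_one_iff₀ (norm_nonneg _), ← norm_pow, csqrt_sq, ← sq_le_one_iff₀ (norm_nonneg _),
      ← normSq_eq_norm_sq]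
    nlinarith
  have hexp : cexp (π / (12 * w)) = cexp (-(π * I * (I / w) / 12)) := by
    congr 1
    field_simp
    simp
  rw [inv_eta_I_mul hre, hexp, ← mul_sub, norm_mul]
  exact mul_le_one₀ hsqrt (norm_nonneg _) (norm_inv_eta_sub_exp_le him)

end DedekindEta

section CircleMethod

open ModularForm
open Complex hiding eta

lemma integral_exp_two_pi_int_mul_I (k : ℤ) :
    ∫ x in (-(1 / 2) : ℝ)..(1 / 2), cexp (2 * π * k * (x * I)) = if k = 0 then 1 else 0 := by
  split_ifs with hk
  · subst hk
    norm_num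
  · have hc : (2 * π * k * I : ℂ) ≠ 0 := by simp [hk, Real.pi_ne_zero]
    have hint := integral_exp_mul_complex (a := -(1 / 2)) (b := 1 / 2) hc
    simp only [mul_right_comm _ I, mul_assoc] at hint ⊢
    rw [hint, div_eq_zero_iff, sub_eq_zero, Complex.exp_eq_exp_iff_exists_int]
    refine .inl ⟨k, ?_⟩
    push_cast
    ring

lemma norm_exp_neg_two_pi_mul_lt_one {w : ℂ} (hw : 0 < w.re) : ‖cexp (-(2 * π * w))‖ < 1 := by
  rw [Complex.norm_exp, Real.exp_lt_one_iff]
  simpa using mul_pos Real.two_pi_pos hw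

lemma hasSum_p_mul_exp (n : ℕ) {w : ℂ} (hw : 0 < w.re) :
    HasSum (fun m : ℕ ↦ (p m : ℂ) * cexp (2 * π * (n - m : ℤ) * w))
      (cexp (2 * π * (n - 1 / 24) * w) * (eta (I * w))⁻¹) := by
  have hI : 2 * π * I * (I * w) = -(2 * π * w) := by linear_combination 2 * π * w * I_sq
  have hexp : cexp (2 * π * (n - 1 / 24) * w) * cexp (-(π * I * (I * w) / 12)) =
      cexp (2 * π * n * w) := by
    rw [← Complex.exp_add]
    congr 1
    linear_combination (-(π * w / 12)) * I_sq
  rw [inv_eta_eq, hI, ← mul_assoc, hexp]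
  refine ((hasSum_p_mul_pow (norm_exp_neg_two_pi_mul_lt_one hw)).mul_left _).congr_fun fun m ↦ ?_
  rw [mul_left_comm, ← Complex.exp_nat_mul, ← Complex.exp_add]
  congr 2
  push_cast
  ring

theorem p_eq_integral_inv_eta (n : ℕ) {y : ℝ} (hy : 0 < y) :
    (p n : ℂ) = ∫ x in (-(1 / 2) : ℝ)..(1 / 2),
      cexp (2 * π * (n - 1 / 24) * (y + x * I)) * (eta (I * (y + x * I)))⁻¹ := by
  have hsum : HasSum (fun m : ℕ ↦ ∫ x in (-(1 / 2) : ℝ)..(1 / 2),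
      (p m : ℂ) * cexp (2 * π * (n - m : ℤ) * (y + x * I)))
      (∫ x in (-(1 / 2) : ℝ)..(1 / 2),
        cexp (2 * π * (n - 1 / 24) * (y + x * I)) * (eta (I * (y + x * I)))⁻¹) := by
    refine intervalIntegral.hasSum_integral_of_dominated_convergence
      (fun m _ ↦ ‖(p m : ℂ) * cexp (2 * π * (n - m : ℤ) * y)‖)
      (fun m ↦ Continuous.aestronglyMeasurable (by fun_prop))
      (fun m ↦ .of_forall fun x _ ↦ ?_)
      (.of_forall fun _ _ ↦ (hasSum_p_mul_exp n (by simpa using hy)).summable.norm)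
      intervalIntegrable_const
      (.of_forall fun x _ ↦ hasSum_p_mul_exp n (by simpa using hy))
    simp [Complex.norm_exp]
  refine (hasSum_ite_eq n (p n : ℂ)).unique (hsum.congr_fun fun m ↦ ?_)
  simp only [mul_add, Complex.exp_add, intervalIntegral.integral_const_mul,
    integral_exp_two_pi_int_mul_I]
  rcases eq_or_ne m n with rfl | h
  · simp
  · simp [h, sub_eq_zero, h.symm]

/-- The function `√w · e^{c w + b / w}`. With `c = 2 * π * (n - 1 / 24)` and `b = π / 12` it is the
integrand of Cauchy's formula for `p n` after `1 / η` is replaced by its leading term at the cusp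
`0`. -/
noncomputable def sqrtMulExp (c b : ℝ) (w : ℂ) : ℂ := Complex.sqrt w * cexp (c * w + b / w)

lemma differentiableAt_sqrtMulExp (c b : ℝ) {w : ℂ} (hw : 0 < w.re) :
    DifferentiableAt ℂ (sqrtMulExp c b) w := by
  have hw0 : w ≠ 0 := ne_zero_of_re_pos hw
  refine DifferentiableAt.mul ?_ (by fun_prop (disch := assumption))
  exact differentiableAt_id.cpow_const (.inl hw)

lemma continuous_sqrtMulExp_line (c b : ℝ) {y : ℝ} (hy : 0 < y) :
    Continuous fun x : ℝ ↦ sqrtMulExp c b (y + x * I) :=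
  continuous_iff_continuousAt.2 fun x ↦ ContinuousAt.comp (f := fun x : ℝ ↦ (y + x * I : ℂ))
    (differentiableAt_sqrtMulExp c b (by simpa using hy)).continuousAt (by fun_prop)

lemma continuous_eta_line {y : ℝ} (hy : 0 < y) :
    Continuous fun x : ℝ ↦ eta (I * (y + x * I)) :=
  continuous_iff_continuousAt.2 fun x ↦
    ContinuousAt.comp (g := eta) (f := fun x : ℝ ↦ I * (y + x * I : ℂ))
      (differentiableAt_eta_of_mem_upperHalfPlaneSet
        (show 0 < (I * (y + x * I) : ℂ).im by simpa using hy)).continuousAt (by fun_prop)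

lemma sqrtMulExp_eq (c : ℝ) (w : ℂ) :
    sqrtMulExp c (π / 12) w = cexp (c * w) * (Complex.sqrt w * cexp (π / (12 * w))) := by
  rw [sqrtMulExp, Complex.exp_add, mul_left_comm, ofReal_div, div_div, ofReal_ofNat]

lemma norm_exp_mul_inv_eta_le_of_far (c : ℝ) {x y : ℝ} (hy : 0 < y) (hy2 : y < 1 / 2)
    (hx : |x| ≤ 1 / 2) (hfar : 4 * y ^ 2 ≤ normSq (y + x * I)) :
    ‖cexp (c * (y + x * I)) * (eta (I * (y + x * I)))⁻¹‖ ≤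
      1.05 * rexp (c * y + π / (48 * y)) := by
  have hre : (y + x * I : ℂ).re = y := by simp
  have him : (y + x * I : ℂ).im = x := by simp
  have heta := norm_inv_eta_I_mul_le_of_far (w := y + x * I) (by rwa [hre]) (by rwa [hre])
    (by rwa [him]) (by rwa [hre])
  rw [norm_mul, Complex.norm_exp, re_ofReal_mul, hre, Real.exp_add, mul_left_comm]
  rw [hre] at heta
  gcongr

lemma norm_exp_mul_inv_eta_sub_le_of_near (c : ℝ) {x y : ℝ} (hy : 0 < y) (hy2 : y < 1 / 2)
    (hnear : normSq (y + x * I) ≤ 4 * y ^ 2) :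
    ‖cexp (c * (y + x * I)) * (eta (I * (y + x * I)))⁻¹ - sqrtMulExp c (π / 12) (y + x * I)‖ ≤
      rexp (c * y) := by
  have hre : (y + x * I : ℂ).re = y := by simp
  have heta := norm_inv_eta_I_mul_sub_le_of_near (w := y + x * I) (by rwa [hre])
    (by rw [hre]; exact hy2.le) (by rwa [hre])
  rw [sqrtMulExp_eq, ← mul_sub, norm_mul, Complex.norm_exp, re_ofReal_mul, hre]
  exact mul_le_of_le_one_right (Real.exp_nonneg _) heta

lemma intervalIntegral_indicator_Ioc {E : Type*} [NormedAddCommGroup E] [NormedSpace ℝ E]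
    {f : ℝ → E} {a b a' b' : ℝ} (ha : a' ≤ a) (hab : a ≤ b) (hb : b ≤ b') :
    ∫ x in a'..b', (Set.Ioc a b).indicator f x = ∫ x in a..b, f x := by
  rw [intervalIntegral.integral_of_le (ha.trans (hab.trans hb)),
    intervalIntegral.integral_of_le hab, MeasureTheory.setIntegral_indicator measurableSet_Ioc,
    Set.inter_eq_self_of_subset_right (Set.Ioc_subset_Ioc ha hb)]

theorem norm_p_sub_integral_sqrtMulExp_le (n : ℕ) {y : ℝ} (hy : 0 < y) (hy2 : √3 * y ≤ 1 / 2) :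
    ‖(p n : ℂ) - ∫ x in (-(√3 * y))..√3 * y,
        sqrtMulExp (2 * π * (n - 1 / 24)) (π / 12) (y + x * I)‖ ≤
      1.05 * rexp (2 * π * (n - 1 / 24) * y + π / (48 * y)) := by
  set c : ℝ := 2 * π * (n - 1 / 24) with hc
  set s : Set ℝ := Set.Ioc (-(√3 * y)) (√3 * y)
  have hy3 : y < 1 / 2 := by nlinarith [Real.sq_sqrt zero_le_three, Real.sqrt_nonneg 3]
  have hF : Continuous fun x : ℝ ↦ cexp (c * (y + x * I)) * (eta (I * (y + x * I)))⁻¹ := by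
    refine Continuous.mul (by fun_prop) ((continuous_eta_line hy).inv₀ fun x ↦ ?_)
    exact eta_ne_zero (show 0 < (I * (y + x * I) : ℂ).im by simpa using hy)
  have hG : IntervalIntegrable (s.indicator fun x : ℝ ↦ sqrtMulExp c (π / 12) (y + x * I))
      MeasureTheory.volume (-(1 / 2)) (1 / 2) := by
    rw [intervalIntegrable_iff]
    exact (intervalIntegrable_iff.1 ((continuous_sqrtMulExp_line c _ hy).intervalIntegrable _ _))
      |>.indicator measurableSet_Ioc
  rw [← intervalIntegral_indicator_Ioc (neg_le_neg hy2)
      (neg_le_self (by positivity : 0 ≤ √3 * y)) hy2, p_eq_integral_inv_eta n hy,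
    show (2 * π * (n - 1 / 24) : ℂ) = c by simp [hc],
    ← intervalIntegral.integral_sub (hF.intervalIntegrable _ _) hG]
  refine (intervalIntegral.norm_integral_le_of_norm_le_const fun x hx ↦ ?_).trans_eq
    (by rw [sub_neg_eq_add, add_halves, abs_one, mul_one])
  rw [Set.uIoc_of_le (by norm_num)] at hx
  by_cases hxs : x ∈ s
  · rw [Set.indicator_of_mem hxs]
    have hexp : rexp (c * y) ≤ rexp (c * y + π / (48 * y)) :=
      Real.exp_le_exp.2 (le_add_of_nonneg_right (by positivity))
    refine (norm_exp_mul_inv_eta_sub_le_of_near c hy hy3 ?_).trans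
      (by linarith [Real.exp_pos (c * y)])
    rw [normSq_add_mul_I]
    nlinarith [Real.sq_sqrt zero_le_three, sq_le_sq' hxs.1.le hxs.2]
  · rw [Set.indicator_of_notMem hxs, sub_zero]
    have hx3 : √3 * y ≤ |x| := by
      by_contra! h
      exact hxs ⟨(abs_lt.1 h).1, (abs_lt.1 h).2.le⟩
    refine norm_exp_mul_inv_eta_le_of_far c hy hy3 (abs_le.2 ⟨hx.1.le, hx.2⟩) ?_
    rw [normSq_add_mul_I, ← sq_abs x]
    nlinarith [Real.sq_sqrt zero_le_three, pow_le_pow_left₀ (by positivity) hx3 2]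

end CircleMethod

section Contour

open Complex

-- The region lies in a disc inside the right half-plane, tangent to the imaginary axis at `0`.
lemma exists_hasDerivAt_of_differentiableOn_re_pos {h : ℂ → ℂ}
    (hh : DifferentiableOn ℂ h {w | 0 < w.re}) {k ρ : ℝ} (hk : 0 < k) (hρ : 0 < ρ) :
    ∃ F : ℂ → ℂ, ∀ w, ‖w‖ ≤ ρ → k ≤ w.re → HasDerivAt F (h w) w := by
  set R : ℝ := ρ ^ 2 / k
  have hRk : R * k = ρ ^ 2 := div_mul_cancel₀ _ hk.ne'
  have hR0 : 0 < R := by positivity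
  have hball {w : ℂ} : w ∈ Metric.ball (R : ℂ) R ↔ ‖w‖ ^ 2 < 2 * (R * w.re) := by
    rw [mem_ball_iff_norm, ← sq_lt_sq₀ (norm_nonneg _) hR0.le, Complex.sq_norm, Complex.sq_norm,
      normSq_apply, normSq_apply, sub_re, sub_im, ofReal_re, ofReal_im]
    constructor <;> intro <;> linarith
  obtain ⟨F, hF⟩ := (hh.mono fun w hw ↦
    (pos_of_mul_pos_right (a := R) (by nlinarith [hball.1 hw, sq_nonneg ‖w‖]) hR0.le :
      0 < w.re)).isExactOn_ball
  refine ⟨F, fun w hwρ hwk ↦ hF w (hball.2 ?_)⟩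
  nlinarith [norm_nonneg w, mul_le_mul_of_nonneg_left hwk hR0.le, pow_pos hρ 2]

lemma integral_chord_eq_integral_arc {h : ℂ → ℂ} (hh : DifferentiableOn ℂ h {w | 0 < w.re})
    {ρ α : ℝ} (hρ : 0 < ρ) (hα0 : 0 ≤ α) (hα : α < π / 2) :
    ∫ x in (-(ρ * Real.sin α))..ρ * Real.sin α, h ((ρ * Real.cos α : ℝ) + x * I) =
      ρ * ∫ φ in -α..α, cexp (φ * I) * h (ρ * cexp (φ * I)) := by
  have hcos : 0 < Real.cos α := Real.cos_pos_of_mem_Ioo ⟨by linarith, hα⟩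
  have hsin : 0 ≤ Real.sin α := Real.sin_nonneg_of_nonneg_of_le_pi hα0 (by linarith [pi_pos])
  obtain ⟨F, hF⟩ := exists_hasDerivAt_of_differentiableOn_re_pos hh (mul_pos hρ hcos) hρ
  have hpath {γ γ' : ℝ → ℂ} {a b : ℝ} (hab : a ≤ b) (hγ : ∀ t, HasDerivAt γ (γ' t) t)
      (hγ' : Continuous γ') (hnorm : ∀ t ∈ Set.Icc a b, ‖γ t‖ ≤ ρ)
      (hre : ∀ t ∈ Set.Icc a b, ρ * Real.cos α ≤ (γ t).re) :
      ∫ t in a..b, h (γ t) * γ' t = F (γ b) - F (γ a) := by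
    rw [← Set.uIcc_of_le hab] at hnorm hre
    refine intervalIntegral.integral_eq_sub_of_hasDerivAt (f := fun t ↦ F (γ t))
      (fun t ht ↦ (hF _ (hnorm t ht) (hre t ht)).comp t (hγ t)) (ContinuousOn.intervalIntegrable ?_)
    exact (hh.continuousOn.comp (fun t _ ↦ (hγ t).continuousAt.continuousWithinAt)
      fun t ht ↦ (mul_pos hρ hcos).trans_le (hre t ht)).mul hγ'.continuousOn
  have hchord : ∫ x in (-(ρ * Real.sin α))..ρ * Real.sin α,
      h ((ρ * Real.cos α : ℝ) + x * I) * I = F (ρ * cexp (α * I)) - F (ρ * cexp (-α * I)) := by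
    rw [hpath (by nlinarith) (fun x ↦ ?_) continuous_const (fun x hx ↦ ?_)
      (by simp [-ofReal_cos])]
    · congr 2 <;> rw [exp_mul_I] <;> simp <;> ring
    · simpa using (ofRealCLM.hasDerivAt.mul_const I).const_add
        ((ρ * Real.cos α : ℝ) : ℂ)
    · rw [← sq_le_sq₀ (norm_nonneg _) hρ.le, Complex.sq_norm, normSq_add_mul_I]
      nlinarith [sq_le_sq' hx.1 hx.2, Real.sin_sq_add_cos_sq α]
  have harc : ∫ φ in -α..α, h (ρ * cexp (φ * I)) * (ρ * (cexp (φ * I) * I)) =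
      F (ρ * cexp (α * I)) - F (ρ * cexp (-α * I)) := by
    rw [hpath (γ := fun φ ↦ ρ * cexp (φ * I)) (by linarith) (fun φ ↦ ?_) (by fun_prop)
      (fun φ _ ↦ by simp [norm_exp_ofReal_mul_I, abs_of_pos hρ]) (fun φ hφ ↦ ?_), ofReal_neg]
    · simpa using ((ofRealCLM.hasDerivAt.mul_const I).cexp.const_mul (ρ : ℂ))
    · rw [re_ofReal_mul, exp_ofReal_mul_I_re, ← Real.cos_abs φ]
      exact mul_le_mul_of_nonneg_left (Real.cos_le_cos_of_nonneg_of_le_pi (abs_nonneg φ)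
        (by linarith [pi_pos]) (abs_le.2 hφ)) hρ.le
  rw [intervalIntegral.integral_mul_const] at hchord
  refine mul_right_cancel₀ I_ne_zero (hchord.trans (harc.symm.trans ?_))
  rw [mul_assoc, ← intervalIntegral.integral_mul_const, ← intervalIntegral.integral_const_mul]
  exact intervalIntegral.integral_congr fun φ _ ↦ by ring

lemma sqrtMulExp_mul_exp (a : ℝ) {ρ φ : ℝ} (hρ : 0 < ρ) (hφ : φ ∈ Set.Ioc (-π) π) :
    sqrtMulExp (a ^ 2 / ρ) (a ^ 2 * ρ) (ρ * cexp (φ * I)) =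
      √ρ * cexp (φ / 2 * I) * rexp (2 * a ^ 2 * Real.cos φ) := by
  have hρ0 : (ρ : ℂ) ≠ 0 := by exact_mod_cast hρ.ne'
  have hpolar : (ρ * cexp (φ * I)) = cexp (Real.log ρ + φ * I) := by
    rw [Complex.exp_add, ← ofReal_exp, Real.exp_log hρ]
  have hlog : Complex.log (ρ * cexp (φ * I)) = Real.log ρ + φ * I := by
    rw [hpolar, Complex.log_exp (by simpa using hφ.1) (by simpa using hφ.2)]
  have hsqrt : Complex.sqrt (ρ * cexp (φ * I)) = √ρ * cexp (φ / 2 * I) := by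
    rw [Complex.sqrt, cpow_def_of_ne_zero (mul_ne_zero hρ0 (Complex.exp_ne_zero _)), hlog,
      Real.sqrt_eq_rpow, Real.rpow_def_of_pos hρ, ofReal_exp, ← Complex.exp_add]
    push_cast
    congr 1
    ring
  rw [sqrtMulExp, hsqrt]
  push_cast
  rw [Complex.cos, neg_mul, Complex.exp_neg]
  congr 2
  field_simp

lemma re_integral_sqrtMulExp_chord (a : ℝ) {ρ α : ℝ} (hρ : 0 < ρ) (hα0 : 0 ≤ α) (hα : α < π / 2) :
    (∫ x in (-(ρ * Real.sin α))..ρ * Real.sin α,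
      sqrtMulExp (a ^ 2 / ρ) (a ^ 2 * ρ) ((ρ * Real.cos α : ℝ) + x * I)).re =
      ρ * √ρ * ∫ φ in -α..α, Real.cos (3 * φ / 2) * rexp (2 * a ^ 2 * Real.cos φ) := by
  have harc : ∫ φ in -α..α, cexp (φ * I) * sqrtMulExp (a ^ 2 / ρ) (a ^ 2 * ρ) (ρ * cexp (φ * I)) =
      ∫ φ in -α..α, (√ρ * rexp (2 * a ^ 2 * Real.cos φ) : ℝ) * cexp ((3 * φ / 2 : ℝ) * I) := by
    refine intervalIntegral.integral_congr fun φ hφ ↦ ?_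
    rw [Set.uIcc_of_le (by linarith)] at hφ
    have hexp : cexp ((3 * φ / 2 : ℝ) * I) = cexp (φ * I) * cexp (φ / 2 * I) := by
      rw [← Complex.exp_add]
      push_cast
      ring_nf
    rw [sqrtMulExp_mul_exp a hρ ⟨by linarith [hφ.1], by linarith [hφ.2]⟩, hexp, ofReal_mul]
    ring
  rw [integral_chord_eq_integral_arc (fun w hw ↦
    (differentiableAt_sqrtMulExp _ _ hw).differentiableWithinAt) hρ hα0 hα, harc, re_ofReal_mul,
    mul_assoc, ← intervalIntegral.integral_const_mul, ← reCLM_apply,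
    ← reCLM.intervalIntegral_comp_comm (Continuous.intervalIntegrable (by fun_prop) _ _)]
  refine congrArg _ (intervalIntegral.integral_congr fun φ _ ↦ ?_)
  rw [reCLM_apply, re_ofReal_mul, exp_ofReal_mul_I_re]
  ring

end Contour

section GaussianIntegral

lemma integral_cos_mul_exp_cos {a : ℝ} (ha : a ≠ 0) (α : ℝ) :
    ∫ φ in -α..α, cos (3 * φ / 2) * rexp (2 * a ^ 2 * cos φ) =
      rexp (2 * a ^ 2) / a *
        ∫ t in (-(2 * a * sin (α / 2)))..2 * a * sin (α / 2),
          (1 - t ^ 2 / a ^ 2) * rexp (-t ^ 2) := by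
  have hderiv (φ : ℝ) :
      HasDerivAt (fun φ ↦ 2 * a * sin (φ / 2)) (a * cos (φ / 2)) φ :=
    (((hasDerivAt_id' φ).div_const 2).sin.const_mul (2 * a)).congr_deriv (by ring)
  have hsubst := intervalIntegral.integral_comp_mul_deriv (a := -α) (b := α)
    (g := fun t ↦ (1 - t ^ 2 / a ^ 2) * rexp (-t ^ 2)) (fun φ _ ↦ hderiv φ)
    (by fun_prop) (by fun_prop)
  rw [neg_div, sin_neg, mul_neg] at hsubst
  rw [← hsubst, ← intervalIntegral.integral_const_mul]
  refine intervalIntegral.integral_congr fun φ _ ↦ ?_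
  have hφ : φ = 2 * (φ / 2) := by ring
  have hsin : sin (φ / 2) ^ 2 = 1 - cos (φ / 2) ^ 2 := sin_sq _
  have hexp : rexp (2 * a ^ 2 * cos φ) =
      rexp (2 * a ^ 2) * rexp (-(2 * a * sin (φ / 2)) ^ 2) := by
    rw [← Real.exp_add, mul_pow, hsin]
    nth_rw 1 [hφ]
    rw [cos_two_mul]
    ring_nf
  have hcos : cos (3 * φ / 2) = (1 - (2 * a * sin (φ / 2)) ^ 2 / a ^ 2) * cos (φ / 2) := by
    rw [mul_div_assoc, cos_three_mul, mul_pow, hsin]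
    field_simp
    ring
  simp only [Function.comp_apply]
  rw [hcos, hexp]
  field_simp

lemma integral_one_sub_sq_mul_exp_neg_sq {a : ℝ} (ha : a ≠ 0) :
    ∫ t in -a..a, (1 - t ^ 2 / a ^ 2) * rexp (-t ^ 2) =
      (1 - 1 / (2 * a ^ 2)) * (∫ t in -a..a, rexp (-t ^ 2)) + rexp (-a ^ 2) / a := by
  have hderiv (t : ℝ) :
      HasDerivAt (fun t ↦ t * rexp (-t ^ 2)) (rexp (-t ^ 2) - 2 * (t ^ 2 * rexp (-t ^ 2))) t :=
    ((hasDerivAt_id' t).mul (hasDerivAt_pow 2 t).fun_neg.exp).congr_deriv (by ring)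
  have hftc := intervalIntegral.integral_eq_sub_of_hasDerivAt (fun t _ ↦ hderiv t)
    (Continuous.intervalIntegrable (by fun_prop) (-a) a)
  have hint₁ : IntervalIntegrable (fun t ↦ rexp (-t ^ 2)) MeasureTheory.volume (-a) a :=
    Continuous.intervalIntegrable (by fun_prop) _ _
  have hint₂ : IntervalIntegrable (fun t ↦ t ^ 2 * rexp (-t ^ 2)) MeasureTheory.volume (-a) a :=
    Continuous.intervalIntegrable (by fun_prop) _ _
  rw [intervalIntegral.integral_sub hint₁ (hint₂.const_mul 2),
    intervalIntegral.integral_const_mul, neg_sq] at hftc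
  simp_rw [sub_mul, one_mul, div_mul_eq_mul_div]
  rw [intervalIntegral.integral_sub hint₁ (hint₂.div_const _), intervalIntegral.integral_div]
  field_simp
  linear_combination hftc

lemma integral_Ioi_exp_neg_sq_le {a : ℝ} (ha : 0 < a) :
    ∫ t in Set.Ioi a, rexp (-t ^ 2) ≤ rexp (-a ^ 2) / (2 * a) := by
  have hint : MeasureTheory.Integrable fun t : ℝ ↦ t * rexp (-t ^ 2) := by
    simpa using integrable_mul_exp_neg_mul_sq one_pos
  have hderiv (t : ℝ) : HasDerivAt (fun t ↦ -rexp (-t ^ 2) / 2) (t * rexp (-t ^ 2)) t :=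
    ((hasDerivAt_pow 2 t).fun_neg.exp.fun_neg.div_const 2).congr_deriv (by push_cast; ring)
  have hlim : Filter.Tendsto (fun t : ℝ ↦ -rexp (-t ^ 2) / 2) Filter.atTop (nhds 0) := by
    simpa using ((tendsto_exp_neg_atTop_nhds_zero.comp
      (Filter.tendsto_pow_atTop two_ne_zero)).neg.div_const (2 : ℝ))
  have hmoment : ∫ t in Set.Ioi a, t * rexp (-t ^ 2) = rexp (-a ^ 2) / 2 := by
    rw [MeasureTheory.integral_Ioi_of_hasDerivAt_of_tendsto' (fun t _ ↦ hderiv t)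
      hint.integrableOn hlim]
    ring
  rw [← div_div, ← hmoment, ← MeasureTheory.integral_div]
  refine MeasureTheory.setIntegral_mono_on ?_ (hint.div_const a).integrableOn measurableSet_Ioi
    fun t ht ↦ ?_
  · simpa using (integrable_exp_neg_mul_sq one_pos).integrableOn
  · rw [mul_comm, mul_div_assoc]
    exact le_mul_of_one_le_right (Real.exp_nonneg _) ((one_le_div ha).2 (le_of_lt ht))

lemma sqrt_pi_sub_integral_exp_neg_sq (a : ℝ) :
    √π - ∫ t in -a..a, rexp (-t ^ 2) = 2 * ∫ t in Set.Ioi a, rexp (-t ^ 2) := by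
  have hint : MeasureTheory.Integrable fun t : ℝ ↦ rexp (-t ^ 2) := by
    simpa using integrable_exp_neg_mul_sq one_pos
  have hgauss : ∫ t : ℝ, rexp (-t ^ 2) = √π := by simpa using integral_gaussian 1
  have hneg : ∫ t in Set.Iic (-a), rexp (-t ^ 2) = ∫ t in Set.Ioi a, rexp (-t ^ 2) := by
    have h := integral_comp_neg_Iic (-a) fun t : ℝ ↦ rexp (-t ^ 2)
    simp_rw [neg_sq, neg_neg] at h
    exact h
  have hright := intervalIntegral.integral_interval_add_Ioi (a := -a) (b := a)
    hint.integrableOn hint.integrableOn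
  have hleft := MeasureTheory.setIntegral_union (Set.Iic_disjoint_Ioi (le_refl (-a)))
    measurableSet_Ioi hint.integrableOn hint.integrableOn
  rw [Set.Iic_union_Ioi, MeasureTheory.setIntegral_univ, hgauss, hneg] at hleft
  linarith

lemma abs_integral_one_sub_sq_mul_exp_neg_sq_sub_le {a : ℝ} (ha : 0 < a) (ha2 : 1 ≤ 2 * a ^ 2) :
    |(∫ t in -a..a, (1 - t ^ 2 / a ^ 2) * rexp (-t ^ 2)) - √π * (1 - 1 / (2 * a ^ 2))| ≤
      rexp (-a ^ 2) / a := by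
  have hnonneg : 0 ≤ ∫ t in Set.Ioi a, rexp (-t ^ 2) :=
    MeasureTheory.integral_nonneg fun t ↦ (Real.exp_pos _).le
  have htail := integral_Ioi_exp_neg_sq_le ha
  have hgauss := sqrt_pi_sub_integral_exp_neg_sq a
  have hc : 1 / (2 * a ^ 2) ≤ 1 := by rwa [div_le_one (by positivity)]
  have hc0 : 0 ≤ 1 / (2 * a ^ 2) := by positivity
  rw [← div_div, div_right_comm] at htail
  rw [integral_one_sub_sq_mul_exp_neg_sq ha.ne', abs_le]
  constructor <;> nlinarith

theorem abs_re_integral_sqrtMulExp_sub_le {a ρ : ℝ} (hρ : 0 < ρ) (ha : 0 < a)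
    (ha2 : 1 ≤ 2 * a ^ 2) :
    |(∫ x in (-(√3 * (ρ / 2)))..√3 * (ρ / 2),
      sqrtMulExp (a ^ 2 / ρ) (a ^ 2 * ρ) ((ρ / 2 : ℝ) + x * Complex.I)).re -
      ρ * √ρ * (√π / a * (1 - 1 / (2 * a ^ 2)) * rexp (2 * a ^ 2))| ≤
      ρ * √ρ * (rexp (a ^ 2) / a ^ 2) := by
  have hchord := re_integral_sqrtMulExp_chord a hρ (α := π / 3) (by positivity)
    (by linarith [pi_pos])
  rw [sin_pi_div_three, cos_pi_div_three, integral_cos_mul_exp_cos ha.ne', div_div,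
    show (3 * 2 : ℝ) = 6 by norm_num, sin_pi_div_six,
    show 2 * a * (1 / 2) = a by ring] at hchord
  have hgauss := abs_integral_one_sub_sq_mul_exp_neg_sq_sub_le ha ha2
  have hexp : rexp (a ^ 2) = rexp (2 * a ^ 2) * rexp (-a ^ 2) := by rw [← Real.exp_add]; ring_nf
  have hscale : 0 ≤ ρ * √ρ * (rexp (2 * a ^ 2) / a) := by positivity
  calc _ = ρ * √ρ * (rexp (2 * a ^ 2) / a) * |(∫ t in -a..a, (1 - t ^ 2 / a ^ 2) * rexp (-t ^ 2)) -
        √π * (1 - 1 / (2 * a ^ 2))| := by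
        rw [mul_div_left_comm, ← mul_one_div ρ 2, hchord, ← abs_of_nonneg hscale, ← abs_mul]
        congr 1
        ring
    _ ≤ ρ * √ρ * (rexp (2 * a ^ 2) / a) * (rexp (-a ^ 2) / a) := by gcongr
    _ = ρ * √ρ * (rexp (a ^ 2) / a ^ 2) := by
        rw [hexp]
        ring

end GaussianIntegral

section MainTerm

lemma T_eq {x : ℝ} (hx : 1 ≤ x) :
    T x = 2 * √3 / (24 * x - 1) * (1 - 1 / mu x) * rexp (mu x) := by
  have hmu : mu x ^ 2 = π ^ 2 / 36 * (24 * x - 1) := by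
    rw [mu, mul_pow, sq_sqrt (by linarith)]
    ring
  have h3 : √3 ^ 2 = 3 := sq_sqrt zero_le_three
  have h0 : 24 * x - 1 ≠ 0 := by linarith
  rw [T, hmu, d]
  congr 2
  field_simp
  linear_combination (-12) * h3

lemma T_eq_sqrt {x r a : ℝ} (hr : 0 < r) (hrsq : r ^ 2 = 24 * x - 1) (ha : 0 < a)
    (hasq : a ^ 2 = π * r / 12) (hmu : mu x = 2 * a ^ 2) (hx : 1 ≤ x) :
    T x = r⁻¹ * √r⁻¹ * (√π / a * (1 - 1 / (2 * a ^ 2)) * rexp (2 * a ^ 2)) := by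
  have hsqrt : √r⁻¹ * √π = 2 * √3 * r⁻¹ * a := by
    rw [← sq_eq_sq₀ (by positivity) (by positivity)]
    simp only [mul_pow]
    rw [sq_sqrt (by positivity), sq_sqrt pi_pos.le, sq_sqrt zero_le_three, hasq]
    field_simp
    norm_num
  calc T x = r⁻¹ * (2 * √3 * r⁻¹ * a) / a * (1 - 1 / (2 * a ^ 2)) * rexp (2 * a ^ 2) := by
        rw [T_eq hx, hmu, ← hrsq]
        field_simp
    _ = _ := by rw [← hsqrt]; ring

theorem abs_p_sub_T_le_exp {n : ℕ} (hn : 1 ≤ n) : |p n - T n| ≤ 1.2 * rexp (mu n / 2) := by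
  have hn' : (1 : ℝ) ≤ n := by exact_mod_cast hn
  obtain ⟨r, hr⟩ : ∃ r, r = √(24 * (n : ℝ) - 1) := ⟨_, rfl⟩
  obtain ⟨a, ha⟩ : ∃ a, a = √(π * r / 12) := ⟨_, rfl⟩
  have hr4 : 4 ≤ r := hr ▸ Real.le_sqrt_of_sq_le (by linarith)
  have hr0 : 0 < r := by linarith
  have hrsq : r ^ 2 = 24 * n - 1 := hr ▸ sq_sqrt (by linarith)
  have hasq : a ^ 2 = π * r / 12 := ha ▸ sq_sqrt (by positivity)
  have hmu : mu n = 2 * a ^ 2 := by rw [hasq, mu, hr]; ring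
  have ha0 : 0 < a := ha ▸ sqrt_pos.2 (by positivity)
  have ha1 : 1 ≤ a ^ 2 := by nlinarith [pi_gt_three]
  have hcircle := norm_p_sub_integral_sqrtMulExp_le n (y := r⁻¹ / 2) (by positivity) (by
    have h3 : √3 ≤ 2 := Real.sqrt_le_iff.2 ⟨two_pos.le, by norm_num⟩
    rw [mul_div_assoc', div_le_div_iff_of_pos_right two_pos, ← div_eq_mul_inv, div_le_one hr0]
    linarith)
  have hmain := abs_re_integral_sqrtMulExp_sub_le (ρ := r⁻¹) (by positivity) ha0 (by linarith)
  have hc : a ^ 2 / r⁻¹ = 2 * π * (n - 1 / 24) := by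
    rw [hasq]
    field_simp
    linear_combination 24 * hrsq
  have hb : a ^ 2 * r⁻¹ = π / 12 := by rw [hasq]; field_simp
  have hexp : 2 * π * (n - 1 / 24) * (r⁻¹ / 2) + π / (48 * (r⁻¹ / 2)) = mu n / 2 := by
    rw [← hc, hmu, hasq]
    field_simp
    norm_num
  have hscale : r⁻¹ * √r⁻¹ * (rexp (a ^ 2) / a ^ 2) ≤ 1 / 8 * rexp (a ^ 2) := by
    have hrinv : r⁻¹ ≤ 1 / 4 := by rw [← one_div]; gcongr
    have hsqrt : √r⁻¹ ≤ 1 / 2 := Real.sqrt_le_iff.2 ⟨by norm_num, by linarith⟩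
    calc _ ≤ 1 / 4 * (1 / 2) * (rexp (a ^ 2) / 1) := by gcongr
      _ = _ := by ring
  rw [hexp] at hcircle
  rw [hc, hb, ← T_eq_sqrt hr0 hrsq ha0 hasq hmu hn'] at hmain
  have hre := (Complex.abs_re_le_norm _).trans hcircle
  rw [Complex.sub_re, Complex.ofReal_re] at hre
  rw [show a ^ 2 = mu n / 2 by rw [hmu]; ring] at hscale hmain
  refine (abs_sub_le _ _ _).trans ((add_le_add hre (hmain.trans hscale)).trans ?_)
  linarith [Real.exp_pos (mu n / 2)]

lemma mul_sq_le_exp_div_six {m : ℝ} (hm : 51 ≤ m) : 1.3 * m ^ 2 ≤ rexp (m / 6) := by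
  have hexp8 : 2.7182 ^ 8 ≤ rexp 8 := by
    rw [show (8 : ℝ) = (8 : ℕ) * 1 by norm_num, Real.exp_nat_mul]
    gcongr
    linarith [Real.exp_one_gt_d9]
  have hhalf : 1.625 ≤ rexp 0.5 :=
    le_trans (by norm_num) (Real.quadratic_le_exp_of_nonneg (x := 0.5) (by norm_num))
  have hrest := Real.quadratic_le_exp_of_nonneg (x := (m - 51) / 6) (by linarith)
  have : 0 ≤ m - 51 := by linarith
  rw [show m / 6 = 8 + 0.5 + (m - 51) / 6 by ring, Real.exp_add, Real.exp_add]
  calc 1.3 * m ^ 2 ≤ 2.7182 ^ 8 * 1.625 * (1 + (m - 51) / 6 + ((m - 51) / 6) ^ 2 / 2) := by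
        norm_num
        nlinarith
    _ ≤ _ := by gcongr

lemma fiftyOne_le_mu {x : ℝ} (hx : 400 ≤ x) : 51 ≤ mu x := by
  have hsqrt : 97.9 ≤ √(24 * x - 1) := Real.le_sqrt_of_sq_le (by linarith)
  rw [mu]
  nlinarith [pi_gt_d2]

lemma lt_d : 0.945 < d := by
  have h3 : √3 ≤ 1.7321 := Real.sqrt_le_iff.2 (by norm_num)
  rw [d, lt_div_iff₀ (by positivity)]
  nlinarith [pi_gt_d2]

lemma abs_p_sub_T_le_mul_of_large {n : ℕ} (hn : 400 ≤ n) :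
    |p n - T n| ≤ T n * rexp (-(mu n / 3)) := by
  have hmu : 51 ≤ mu n := fiftyOne_le_mu (by exact_mod_cast hn)
  have : 0 < mu n := by linarith
  have hone : 0.98 ≤ 1 - 1 / mu n := by
    have : 1 / mu n ≤ 1 / 51 := by gcongr
    norm_num at this ⊢
    linarith
  have hexp : rexp (mu n) * rexp (-(mu n / 3)) = rexp (mu n / 6) * rexp (mu n / 2) := by
    rw [← Real.exp_add, ← Real.exp_add]
    ring_nf
  have hd := lt_d
  have : 0 ≤ d / mu n ^ 2 * (1 - 1 / mu n) :=
    mul_nonneg (div_nonneg (by linarith) (sq_nonneg _)) (by linarith)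
  calc |p n - T n| ≤ 1.2 * rexp (mu n / 2) := abs_p_sub_T_le_exp (by omega)
    _ ≤ 0.945 * 0.98 * 1.3 * rexp (mu n / 2) := by gcongr; norm_num
    _ = 0.945 / mu n ^ 2 * 0.98 * (1.3 * mu n ^ 2 * rexp (mu n / 2)) := by field_simp
    _ ≤ d / mu n ^ 2 * (1 - 1 / mu n) * (rexp (mu n / 6) * rexp (mu n / 2)) := by
        gcongr
        exact mul_sq_le_exp_div_six hmu
    _ = T n * rexp (-(mu n / 3)) := by
        rw [← hexp, T]
        ring

end MainTerm

section PackedPartitionNumbers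

open Finset

lemma sum_partsLE_succ_of_pow_eq_zero {R : Type*} [CommRing R] {q : R} {N : ℕ} (hq : q ^ N = 0)
    (k : ℕ) :
    ∑ n ∈ range N, (partsLE (k + 1) n : R) * q ^ n =
      (∑ n ∈ range N, (partsLE k n : R) * q ^ n) *
        ∑ j ∈ range (N / (k + 1) + 1), (q ^ (k + 1)) ^ j := by
  set S := ∑ n ∈ range N, (partsLE (k + 1) n : R) * q ^ n with hS
  have htail : q ^ (k + 1) * ∑ n ∈ range (N - (k + 1)), (partsLE (k + 1) n : R) * q ^ n =
      q ^ (k + 1) * S := by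
    rw [hS, ← sum_range_add_sum_Ico _ (Nat.sub_le N (k + 1)), mul_add, left_eq_add, mul_sum]
    refine sum_eq_zero fun i hi ↦ ?_
    rw [mem_Ico] at hi
    rw [mul_left_comm, ← pow_add, pow_eq_zero_of_le (by omega) hq, mul_zero]
  have hrec : ∑ n ∈ range N, (partsLE k n : R) * q ^ n = (1 - q ^ (k + 1)) * S := by
    linear_combination -sum_range_partsLE_succ q k N - htail
  have hzero : (q ^ (k + 1)) ^ (N / (k + 1) + 1) = 0 := by
    rw [← pow_mul]
    exact pow_eq_zero_of_le (Nat.lt_mul_div_succ N k.succ_pos).le hq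
  rw [hrec, mul_right_comm, mul_neg_geom_sum, hzero, sub_zero, one_mul]

/-- The numbers `partsLE k n`, for `n < N`, packed as the base `Z` digits of a natural number.
Multiplication by a geometric sum replaces division by `1 - Z ^ (k + 1)` modulo `Z ^ N`. -/
def packedPartsLE (Z N : ℕ) : ℕ → ℕ
  | 0 => 1
  | k + 1 => packedPartsLE Z N k *
      (((Z ^ (k + 1)) ^ (N / (k + 1) + 1) - 1) / (Z ^ (k + 1) - 1)) % Z ^ N

lemma packedPartsLE_modEq {Z N : ℕ} (hZ : 2 ≤ Z) (hN : N ≠ 0) (k : ℕ) :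
    packedPartsLE Z N k ≡ ∑ n ∈ range N, partsLE k n * Z ^ n [MOD Z ^ N] := by
  have hq : (Z : ZMod (Z ^ N)) ^ N = 0 := by exact_mod_cast ZMod.natCast_self (Z ^ N)
  rw [← ZMod.natCast_eq_natCast_iff]
  push_cast
  induction k with
  | zero => simp [packedPartsLE, partsLE_zero, hN]
  | succ k ih =>
    rw [sum_partsLE_succ_of_pow_eq_zero hq, ← ih, packedPartsLE, ZMod.natCast_mod,
      ← Nat.geomSum_eq (hZ.trans (Nat.le_self_pow k.succ_ne_zero Z))]
    push_cast
    rfl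

lemma sum_digits_div_pow_mod {Z N n : ℕ} {c : ℕ → ℕ} (hc : ∀ i < N, c i < Z) (hn : n < N) :
    (∑ i ∈ range N, c i * Z ^ i) / Z ^ n % Z = c n := by
  induction N generalizing n c with
  | zero => omega
  | succ N ih =>
    have hc0 : c 0 < Z := hc 0 (by omega)
    have hsum : ∑ i ∈ range (N + 1), c i * Z ^ i =
        Z * ∑ i ∈ range N, c (i + 1) * Z ^ i + c 0 := by
      rw [sum_range_succ', mul_sum, pow_zero, mul_one]
      congr 1
      exact sum_congr rfl fun i _ ↦ by ring
    rw [hsum]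
    cases n with
    | zero => rw [pow_zero, Nat.div_one, Nat.mul_add_mod, Nat.mod_eq_of_lt hc0]
    | succ n =>
      rw [pow_succ', ← Nat.div_div_eq_div_mul, Nat.mul_add_div (by omega),
        Nat.div_eq_of_lt hc0, add_zero]
      exact ih (fun i hi ↦ hc (i + 1) (by omega)) (by omega)

lemma card_partition_lt {n N : ℕ} (h : n < N) : Fintype.card n.Partition < 2 ^ N := by
  have hcard := Fintype.card_le_of_surjective _ (Nat.Partition.ofComposition_surj (n := n))
  rw [composition_card] at hcard
  exact hcard.trans_lt (Nat.pow_lt_pow_right one_lt_two (by omega))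

lemma packedPartsLE_div_pow_mod {n N : ℕ} (h : n < N) :
    packedPartsLE (2 ^ N) N N / (2 ^ N) ^ n % 2 ^ N = Fintype.card n.Partition := by
  have hN : N ≠ 0 := Nat.ne_zero_of_lt h
  have hc : ∀ i < N, partsLE N i < 2 ^ N := fun i hi ↦ by
    rw [partsLE_of_le hi.le]
    exact card_partition_lt hi
  have hmod := (packedPartsLE_modEq (Nat.le_self_pow hN 2) hN N).of_dvd
    ((pow_succ _ n).symm.dvd.trans (pow_dvd_pow (2 ^ N) h))
  rw [← Nat.mod_mul_right_div_self, show _ % _ = _ % _ from hmod, Nat.mod_mul_right_div_self,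
    sum_digits_div_pow_mod hc h, partsLE_of_le h.le]

end PackedPartitionNumbers

section Numerics

/-- A rational lower bound for `√n`, with error at most `10⁻¹²`. -/
def sqrtLower (n : ℕ) : ℚ := Nat.sqrt (n * 10 ^ 24) / 10 ^ 12

/-- A rational upper bound for `√n`, with error at most `10⁻¹²`. -/
def sqrtUpper (n : ℕ) : ℚ := (Nat.sqrt (n * 10 ^ 24) + 1) / 10 ^ 12

lemma sqrt_mul_ten_pow (n : ℕ) : √((n * 10 ^ 24 : ℕ) : ℝ) = √n * 10 ^ 12 := by
  rw [Nat.cast_mul, Real.sqrt_mul n.cast_nonneg, Nat.cast_pow, show 24 = 12 * 2 by norm_num,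
    pow_mul, Real.sqrt_sq (by positivity), Nat.cast_ofNat]

lemma sqrtLower_nonneg (n : ℕ) : 0 ≤ sqrtLower n := by
  rw [sqrtLower]
  positivity

lemma sqrtLower_le (n : ℕ) : (sqrtLower n : ℝ) ≤ √n := by
  have h := Real.nat_sqrt_le_real_sqrt (a := n * 10 ^ 24)
  rw [sqrt_mul_ten_pow] at h
  rw [sqrtLower]
  push_cast
  rwa [div_le_iff₀ (by positivity)]

lemma le_sqrtUpper (n : ℕ) : √n ≤ sqrtUpper n := by
  have h := Real.real_sqrt_lt_nat_sqrt_succ (a := n * 10 ^ 24)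
  rw [sqrt_mul_ten_pow] at h
  rw [sqrtUpper]
  push_cast
  rw [le_div_iff₀ (by positivity)]
  exact h.le

/-- A rational lower bound for `mu n`. -/
def muLower (n : ℕ) : ℚ := 3.141592653589 / 6 * sqrtLower (24 * n - 1)

/-- A rational upper bound for `mu n`. -/
def muUpper (n : ℕ) : ℚ := 3.14159265359 / 6 * sqrtUpper (24 * n - 1)

lemma mu_natCast {n : ℕ} (hn : 1 ≤ n) : mu n = π / 6 * √(24 * n - 1 : ℕ) := by
  rw [mu, Nat.cast_sub (by omega)]
  push_cast
  rfl

lemma muLower_le {n : ℕ} (hn : 1 ≤ n) : (muLower n : ℝ) ≤ mu n := by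
  have hpi : 3.141592653589 ≤ π := le_trans (by norm_num) pi_gt_d20.le
  have h := sqrtLower_le (24 * n - 1)
  rw [mu_natCast hn, muLower]
  push_cast
  exact mul_le_mul_of_nonneg (by linarith) h (by norm_num) (sqrt_nonneg _)

lemma le_muUpper {n : ℕ} (hn : 1 ≤ n) : mu n ≤ muUpper n := by
  have hpi : π ≤ 3.14159265359 := pi_lt_d20.le.trans (by norm_num)
  have h := le_sqrtUpper (24 * n - 1)
  rw [mu_natCast hn, muUpper]
  push_cast
  gcongr

/-- The Taylor polynomial of degree `11` of the exponential, a lower bound for `exp x`. -/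
def expLower (x : ℚ) : ℚ := ∑ i ∈ Finset.range 12, x ^ i / i.factorial

/-- The Taylor polynomial of degree `11` with a bound for its remainder, an upper bound for `exp x`
when `x ≤ 1`. -/
def expUpper (x : ℚ) : ℚ := expLower x + x ^ 12 * 13 / (Nat.factorial 12 * 12)

lemma expLower_le {x : ℚ} (hx : 0 ≤ x) : (expLower x : ℝ) ≤ rexp x := by
  rw [expLower]
  push_cast
  exact Real.sum_le_exp_of_nonneg (by exact_mod_cast hx) 12

lemma le_expUpper {x : ℚ} (hx : 0 ≤ x) (hx1 : x ≤ 1) : rexp x ≤ expUpper x := by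
  have h := Real.exp_bound' (x := x) (n := 12) (by exact_mod_cast hx) (by exact_mod_cast hx1)
    (by norm_num)
  rw [expUpper, expLower]
  push_cast at h ⊢
  norm_num at h ⊢
  exact h

/-- `T x * (1 + σ * exp (-mu x / 3))` as a function of `w = √3`, `m = mu x` and
`X = exp (mu x / 3)`, over any field so that it can be evaluated at rational numbers. -/
def envelope {K : Type*} [Field K] (σ x w m X : K) : K :=
  2 * w / (24 * x - 1) * (1 - 1 / m) * (X ^ 2 * (X + σ))

lemma ratCast_envelope (σ x w m X : ℚ) :
    ((envelope σ x w m X : ℚ) : ℝ) = envelope (σ : ℝ) x w m X := by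
  simp only [envelope]
  push_cast
  rfl

lemma envelope_eq (σ : ℝ) {x : ℝ} (hx : 1 ≤ x) :
    envelope σ x √3 (mu x) (rexp (mu x / 3)) = T x * (1 + σ * rexp (-(mu x / 3))) := by
  have hexp : rexp (mu x) = rexp (mu x / 3) ^ 3 := by rw [← Real.exp_nat_mul]; ring_nf
  rw [envelope, T_eq hx, hexp, Real.exp_neg]
  field_simp

lemma envelope_le_envelope {σ x w w' m m' X X' : ℝ} (hσ : -1 ≤ σ) (hx : 1 ≤ x) (hw : 0 ≤ w)
    (hww' : w ≤ w') (hm : 1 ≤ m) (hmm' : m ≤ m') (hX : 1 ≤ X) (hXX' : X ≤ X') :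
    envelope σ x w m X ≤ envelope σ x w' m' X' := by
  have hx' : 0 < 24 * x - 1 := by linarith
  have hm' : 0 ≤ 1 - 1 / m := sub_nonneg.2 (div_le_one_of_le₀ hm (by linarith))
  have hm'' : 1 - 1 / m ≤ 1 - 1 / m' := by gcongr
  have hXσ : 0 ≤ X + σ := by linarith
  have hw' := hw.trans hww'
  have := hm'.trans hm''
  rw [envelope, envelope]
  gcongr

/-- A rational lower bound for `T n * (1 + exp (-mu n / 3))`. -/
def envelopeLower (n : ℕ) : ℚ :=
  envelope 1 n (sqrtLower 3) (muLower n) (expLower (muLower n / 96) ^ 32)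

/-- A rational upper bound for `T n * (1 - exp (-mu n / 3))`. -/
def envelopeUpper (n : ℕ) : ℚ :=
  envelope (-1) n (sqrtUpper 3) (muUpper n) (expUpper (muUpper n / 96) ^ 32)

lemma exp_div_three (x : ℝ) : rexp (x / 3) = rexp (x / 96) ^ 32 := by
  rw [← Real.exp_nat_mul]
  ring_nf

lemma one_le_expLower {x : ℚ} (hx : 0 ≤ x) : 1 ≤ expLower x := by
  rw [expLower, Finset.sum_range_succ']
  have : 0 ≤ ∑ i ∈ Finset.range 11, x ^ (i + 1) / (i + 1).factorial :=
    Finset.sum_nonneg fun i _ ↦ by positivity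
  simpa using this

lemma envelopeLower_le {n : ℕ} (hn : 1 ≤ n) (hmu : 1 ≤ muLower n) :
    (envelopeLower n : ℝ) ≤ T n * (1 + rexp (-(mu n / 3))) := by
  have hx : 0 ≤ muLower n / 96 := by linarith
  have hexp : rexp ((muLower n / 96 : ℚ) : ℝ) ≤ rexp (mu n / 96) := by
    push_cast
    gcongr
    exact muLower_le hn
  have hw : (0 : ℝ) ≤ sqrtLower 3 := by exact_mod_cast sqrtLower_nonneg 3
  have hX : (1 : ℝ) ≤ expLower (muLower n / 96) := by exact_mod_cast one_le_expLower hx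
  rw [envelopeLower, ratCast_envelope, ← one_mul (rexp _), ← envelope_eq 1 (by exact_mod_cast hn),
    exp_div_three]
  push_cast
  exact envelope_le_envelope (by norm_num) (by exact_mod_cast hn) hw (sqrtLower_le 3)
    (by exact_mod_cast hmu) (muLower_le hn) (one_le_pow₀ hX)
    (pow_le_pow_left₀ (by linarith) ((expLower_le hx).trans hexp) 32)

lemma le_envelopeUpper {n : ℕ} (hn : 1 ≤ n) (hmu : 1 ≤ mu n) (hmu' : muUpper n ≤ 96) :
    T n * (1 - rexp (-(mu n / 3))) ≤ envelopeUpper n := by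
  have hx : (0 : ℝ) ≤ muUpper n := by linarith [le_muUpper hn]
  have hexp : rexp (mu n / 96) ≤ rexp ((muUpper n / 96 : ℚ) : ℝ) := by
    push_cast
    gcongr
    exact le_muUpper hn
  have hX := le_expUpper (div_nonneg (by exact_mod_cast hx) (by norm_num) : 0 ≤ muUpper n / 96)
    (by linarith)
  rw [envelopeUpper, ratCast_envelope, sub_eq_add_neg, ← neg_one_mul (rexp _),
    ← envelope_eq (-1) (by exact_mod_cast hn), exp_div_three]
  push_cast
  exact envelope_le_envelope le_rfl (by exact_mod_cast hn) (sqrt_nonneg 3) (le_sqrtUpper 3)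
    hmu (le_muUpper hn) (one_le_pow₀ (Real.one_le_exp (by linarith)))
    (pow_le_pow_left₀ (Real.exp_pos _).le (hexp.trans hX) 32)

lemma packedPartsLE_mem_envelope : ∀ n < 400, 39 ≤ n →
    1 ≤ muLower n ∧ muUpper n ≤ 96 ∧
    envelopeUpper n ≤ (packedPartsLE (2 ^ 400) 400 400 / (2 ^ 400) ^ n % 2 ^ 400 : ℕ) ∧
    (packedPartsLE (2 ^ 400) 400 400 / (2 ^ 400) ^ n % 2 ^ 400 : ℕ) ≤ envelopeLower n := by
  decide +kernel

lemma abs_p_sub_T_le_mul_of_lt {n : ℕ} (hn : 39 ≤ n) (hn' : n < 400) :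
    |p n - T n| ≤ T n * rexp (-(mu n / 3)) := by
  obtain ⟨hmu, hmu', hup, hlow⟩ := packedPartsLE_mem_envelope n hn' hn
  rw [packedPartsLE_div_pow_mod hn'] at hup hlow
  have hn1 : 1 ≤ n := by omega
  have hmu1 : 1 ≤ mu n := le_trans (by exact_mod_cast hmu) (muLower_le hn1)
  have hup' : (envelopeUpper n : ℝ) ≤ p n := by rw [p]; exact_mod_cast hup
  have hlow' : p n ≤ (envelopeLower n : ℝ) := by rw [p]; exact_mod_cast hlow
  rw [abs_le]
  constructor
  · linarith [le_envelopeUpper hn1 hmu1 hmu']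
  · linarith [envelopeLower_le hn1 hmu]

theorem abs_p_sub_T_le_mul {n : ℕ} (hn : 39 ≤ n) : |p n - T n| ≤ T n * rexp (-(mu n / 3)) :=
  (lt_or_ge n 400).elim (abs_p_sub_T_le_mul_of_lt hn) abs_p_sub_T_le_mul_of_large

end Numerics

section SecondDifference

lemma abs_log_le_of_abs_sub_one_le {u ε : ℝ} (hε : ε ≤ 1 / 6) (h : |u - 1| ≤ ε) :
    |Real.log u| ≤ 1.2 * ε := by
  obtain ⟨hlower, hupper⟩ := abs_le.mp h
  have hu : 0 < u := by linarith
  have hinv : u⁻¹ ≤ 1 + 1.2 * ε := by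
    rw [inv_le_iff_one_le_mul₀ hu]
    nlinarith
  exact abs_le.mpr ⟨by linarith [Real.one_sub_inv_le_log_of_pos hu],
    by linarith [Real.log_le_sub_one_of_pos hu]⟩

lemma mu_mono : Monotone mu := fun x y hxy ↦ by
  rw [mu, mu]
  gcongr

lemma fifteen_le_mu {x : ℝ} (hx : 39 ≤ x) : 15 ≤ mu x := by
  have hsqrt : 30 ≤ √(24 * x - 1) := Real.le_sqrt_of_sq_le (by linarith)
  rw [mu]
  nlinarith [pi_gt_three]

lemma T_pos {x : ℝ} (hx : 1 < mu x) : 0 < T x := by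
  have hmu : 0 < mu x := by linarith
  have hone : 0 < 1 - 1 / mu x := sub_pos.2 ((div_lt_one hmu).2 hx)
  have hd : 0 < d := by linarith [lt_d]
  rw [T]
  positivity

lemma abs_E_le {n : ℕ} (hn : 39 ≤ n) : |E n| ≤ 1.2 * (1 / n * rexp (-(mu n / 3))) := by
  have hmu : 15 ≤ mu n := fifteen_le_mu (by exact_mod_cast hn)
  have hT : 0 < T n := T_pos (by linarith)
  have hε : rexp (-(mu n / 3)) ≤ 1 / 6 := by
    rw [Real.exp_neg, inv_eq_one_div]
    refine one_div_le_one_div_of_le (by norm_num) ?_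
    linarith [Real.add_one_le_exp (mu n / 3)]
  have hratio : |p n / T n - 1| ≤ rexp (-(mu n / 3)) := by
    rw [div_sub_one hT.ne', abs_div, abs_of_pos hT, div_le_iff₀' hT]
    exact abs_p_sub_T_le_mul hn
  rw [E, abs_mul, abs_of_nonneg (by positivity), mul_left_comm]
  gcongr
  exact abs_log_le_of_abs_sub_one_le hε hratio

lemma one_div_mul_exp_neg_mu_le {k n : ℕ} (hk : 0 < k) (hkn : k ≤ n) :
    1 / n * rexp (-(mu n / 3)) ≤ 1 / k * rexp (-(mu k / 3)) := by
  have hmu : mu k ≤ mu n := mu_mono (by exact_mod_cast hkn)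
  gcongr

lemma mu_sub_one_div_three (x : ℝ) : mu (x - 1) / 3 = π * √(24 * x - 25) / 18 := by
  rw [mu]
  ring_nf

end SecondDifference

theorem second_difference_E_bound (n : ℕ) (hn : 40 ≤ n) :
    |E (n + 1) + E (n - 1) - 2 * E n| <
      5 / ((n : ℝ) - 1) * Real.exp (-(π * Real.sqrt (24 * (n : ℝ) - 25)) / 18) := by
  have hE {m : ℕ} (hm : n - 1 ≤ m) :
      |E m| ≤ 1.2 * (1 / (n - 1 : ℕ) * rexp (-(mu (n - 1 : ℕ) / 3))) :=
    (abs_E_le (by omega)).trans (by gcongr 1.2 * ?_; exact one_div_mul_exp_neg_mu_le (by omega) hm)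
  have hpos : 0 < 1 / ((n - 1 : ℕ) : ℝ) * rexp (-(mu (n - 1 : ℕ) / 3)) :=
    mul_pos (one_div_pos.2 (by norm_cast; omega)) (Real.exp_pos _)
  rw [Nat.cast_sub (by omega), Nat.cast_one, mu_sub_one_div_three] at hE hpos
  calc |E (n + 1) + E (n - 1) - 2 * E n| ≤ |E (n + 1)| + |E (n - 1)| + 2 * |E n| := by
        refine (abs_sub _ _).trans (add_le_add (abs_add_le _ _) (le_of_eq ?_))
        rw [abs_mul, abs_two]
    _ ≤ 4.8 * (1 / ((n : ℝ) - 1) * rexp (-(π * √(24 * n - 25) / 18))) := by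
        linarith [hE (m := n + 1) (by omega), hE le_rfl, hE (m := n) (by omega)]
    _ < 5 * (1 / ((n : ℝ) - 1) * rexp (-(π * √(24 * n - 25) / 18))) := by gcongr; norm_num
    _ = _ := by rw [← neg_div]; ring
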